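/- arXiv:2302.13030 — 2 statements merged into one kernel-verified Lean document; each statement's English description precedes it below -/
import Mathlib

section
/- The fractional Riesz potentials related to chirp functions form a semigroup: for α ∈ ℝⁿ with no coordinate in πℤ and β₁, β₂ ∈ (0,n) with β₁ + β₂ ∈ (0,n), one has I_{β₁}^α I_{β₂}^α f = I_{β₁+β₂}^α f for every Schwartz function f (as tempered distributions). -/
open MeasureTheory Real SchwartzMap Filter
open scoped FourierTransform

noncomputable section

abbrev Rn (n : ℕ) := EuclideanSpace ℝ (Fin n)

/-- The chirp function `e_α(x) = exp(2πi Σₖ (cot αₖ / 2) xₖ²)`. -/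
def chirp {n : ℕ} (α : Rn n) (x : Rn n) : ℂ :=
  Complex.exp (2 * (π : ℂ) * Complex.I *
    ((∑ k, Real.cot (α k) / 2 * (x k) ^ 2 : ℝ) : ℂ))

/-- The constant `c(α) = ∏ₖ √(1 - i cot αₖ)`. -/
def cConst {n : ℕ} (α : Rn n) : ℂ :=
  ∏ k, (1 - Complex.I * (Real.cot (α k) : ℂ)) ^ ((1 : ℂ) / 2)

/-- The FRFT kernel `K_α(x,u)`. -/
def frftKernel {n : ℕ} (α : Rn n) (x u : Rn n) : ℂ :=
  ∏ k, (1 - Complex.I * (Real.cot (α k) : ℂ)) ^ ((1 : ℂ) / 2) *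
    Complex.exp (2 * (π : ℂ) * Complex.I *
      ((Real.cot (α k) / 2 * ((x k) ^ 2 + (u k) ^ 2)
        - x k * u k / Real.sin (α k) : ℝ) : ℂ))

/-- The multidimensional fractional Fourier transform. -/
def frft {n : ℕ} (α : Rn n) (f : Rn n → ℂ) (u : Rn n) : ℂ :=
  ∫ x, f x * frftKernel α x u

/-- `ũ = (u₁ csc α₁, ..., uₙ csc αₙ)`. -/
def tilde {n : ℕ} (α u : Rn n) : Rn n :=
  (EuclideanSpace.equiv (Fin n) ℝ).symm fun k => u k / Real.sin (α k)

/-- `γ(β) = π^{n/2} 2^β Γ(β/2) / Γ((n-β)/2)`. -/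
def gammaC (n : ℕ) (β : ℝ) : ℝ :=
  π ^ ((n : ℝ) / 2) * 2 ^ β * Real.Gamma (β / 2) / Real.Gamma (((n : ℝ) - β) / 2)

/-- The classical Riesz potential `I_β`. -/
def rieszPot (n : ℕ) (β : ℝ) (f : Rn n → ℂ) (x : Rn n) : ℂ :=
  ((1 / gammaC n β : ℝ) : ℂ) * ∫ y, f y / ((‖x - y‖ ^ ((n : ℝ) - β) : ℝ) : ℂ)

/-- The fractional Riesz potential related to chirp functions `I_β^α`. -/
def rieszPotChirp {n : ℕ} (α : Rn n) (β : ℝ) (f : Rn n → ℂ) (x : Rn n) : ℂ :=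
  ((1 / gammaC n β : ℝ) : ℂ) * chirp (-α) x *
    ∫ y, f y * chirp α y / ((‖x - y‖ ^ ((n : ℝ) - β) : ℝ) : ℂ)

/-- `c_n = Γ((n+1)/2)/π^{(n+1)/2}`. -/
def nConst (n : ℕ) : ℝ := Real.Gamma (((n : ℝ) + 1) / 2) / π ^ (((n : ℝ) + 1) / 2)

/-- The j-th fractional Riesz transform related to chirp functions (principal value). -/
def rieszTransChirp {n : ℕ} (α : Rn n) (j : Fin n) (f : Rn n → ℂ) (x : Rn n) : ℂ :=
  ((nConst n : ℝ) : ℂ) * chirp (-α) x *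
    limUnder (nhdsWithin (0 : ℝ) (Set.Ioi 0)) fun ε =>
      ∫ y in {y : Rn n | ε < dist x y},
        (((x j - y j) / ‖x - y‖ ^ ((n : ℝ) + 1) : ℝ) : ℂ) * f y * chirp α y

/-- Partial derivative in the k-th coordinate direction. -/
def partialD {n : ℕ} (k : Fin n) (g : Rn n → ℂ) (y : Rn n) : ℂ :=
  fderiv ℝ g y (EuclideanSpace.single k 1)

/-- `α` has no coordinate in `πℤ`. -/
def notPiZ {n : ℕ} (α : Rn n) : Prop := ∀ k, ∀ m : ℤ, α k ≠ m * π

def rzW (a t : ℝ) : ENNReal :=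
  if 0 < t then ENNReal.ofReal (t ^ (a - 1) / Real.Gamma a) else 0

def rzh (n : ℕ) (t r : ℝ) : ℝ := (4 * π * t) ^ (-((n : ℝ) / 2)) * Real.exp (-(r ^ 2 / (4 * t)))

def rzk (n : ℕ) (β : ℝ) (x : Rn n) : ℝ := 1 / gammaC n β * (‖x‖ ^ ((n : ℝ) - β))⁻¹

lemma measurable_rzW (a : ℝ) : Measurable (rzW a) := by
  unfold rzW
  exact Measurable.ite measurableSet_Ioi (by fun_prop) measurable_const

lemma measurable_rzh (n : ℕ) : Measurable (fun p : ℝ × ℝ => rzh n p.1 p.2) := by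
  unfold rzh
  fun_prop

lemma measurable_rzk (n : ℕ) (β : ℝ) : Measurable (rzk n β) := by
  unfold rzk
  fun_prop

lemma rzh_pos (n : ℕ) {t : ℝ} (ht : 0 < t) (r : ℝ) : 0 < rzh n t r := by
  unfold rzh; positivity

lemma gammaC_pos {n : ℕ} {β : ℝ} (h : β ∈ Set.Ioo 0 (n : ℝ)) : 0 < gammaC n β := by
  unfold gammaC
  have h1 : 0 < Real.Gamma (β / 2) := Real.Gamma_pos_of_pos (by linarith [h.1])
  have h2 : 0 < Real.Gamma (((n : ℝ) - β) / 2) := Real.Gamma_pos_of_pos (by linarith [h.2])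
  positivity

lemma rzk_nonneg {n : ℕ} {β : ℝ} (h : β ∈ Set.Ioo 0 (n : ℝ)) (x : Rn n) : 0 ≤ rzk n β x := by
  have := gammaC_pos h
  unfold rzk
  positivity

lemma rzW_conv {a b : ℝ} (ha : 0 < a) (hb : 0 < b) (u : ℝ) :
    ∫⁻ s, rzW a s * rzW b (u - s) = rzW (a + b) u := by
  by_cases hu : 0 < u
  · have hG1 := Real.Gamma_pos_of_pos ha
    have hG2 := Real.Gamma_pos_of_pos hb
    have hG3 := Real.Gamma_pos_of_pos (add_pos ha hb)
    have key : ∀ v, rzW a (u * v) * rzW b (u - u * v) =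
        ENNReal.ofReal (u ^ (a + b - 2) / Real.Gamma (a + b)) *
          ProbabilityTheory.betaPDF a b v := by
      intro v
      rw [ProbabilityTheory.betaPDF_eq]
      unfold rzW
      have e : u - u * v = u * (1 - v) := by ring
      rw [e]
      by_cases h1 : 0 < v
      · by_cases h2 : v < 1
        · have h2' : 0 < 1 - v := by linarith
          rw [if_pos (by positivity), if_pos (by positivity), if_pos ⟨h1, h2⟩,
            ← ENNReal.ofReal_mul (by positivity), ← ENNReal.ofReal_mul (by positivity)]
          congr 1
          rw [Real.mul_rpow hu.le h1.le, Real.mul_rpow hu.le h2'.le,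
            show a + b - 2 = (a - 1) + (b - 1) by ring, Real.rpow_add hu, ProbabilityTheory.beta]
          field_simp
        · have : ¬ (0 < u * (1 - v)) := by
            rw [not_lt]; exact mul_nonpos_of_nonneg_of_nonpos hu.le (by linarith)
          simp [this, h2]
      · have : ¬ (0 < u * v) := by
          rw [not_lt]; exact mul_nonpos_of_nonneg_of_nonpos hu.le (by linarith)
        simp [this, h1]
    conv_lhs => rw [← Real.smul_map_volume_mul_left hu.ne']
    rw [lintegral_smul_measure, lintegral_map
      (by have := measurable_rzW a; have := measurable_rzW b; fun_prop) (by fun_prop)]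
    simp_rw [key]
    rw [lintegral_const_mul' _ _ ENNReal.ofReal_ne_top,
      ProbabilityTheory.lintegral_betaPDF_eq_one ha hb, mul_one, smul_eq_mul,
      ← ENNReal.ofReal_mul (abs_nonneg _), rzW, if_pos hu, abs_of_pos hu]
    congr 1
    rw [show a + b - 1 = (a + b - 2) + 1 by ring, Real.rpow_add hu, Real.rpow_one]
    ring
  · have : ∀ s, rzW a s * rzW b (u - s) = 0 := by
      intro s
      unfold rzW
      by_cases h1 : 0 < s
      · rw [if_neg (show ¬ (0 < u - s) by linarith), mul_zero]
      · rw [if_neg h1, zero_mul]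
    simp_rw [this]; simp [rzW, hu]

lemma rzh_conv (n : ℕ) {s t : ℝ} (hs : 0 < s) (ht : 0 < t) (x z : Rn n) :
    ∫⁻ y, ENNReal.ofReal (rzh n s ‖x - y‖) * ENNReal.ofReal (rzh n t ‖y - z‖) =
      ENNReal.ofReal (rzh n (s + t) ‖x - z‖) := by
  have hst : 0 < s + t := by positivity
  set m : Rn n := (t / (s + t)) • x + (s / (s + t)) • z with hm
  set b : ℝ := (s + t) / (4 * s * t) with hb
  have hbp : 0 < b := by positivity
  have key : ∀ y : Rn n, rzh n s ‖x - (y + m)‖ * rzh n t ‖(y + m) - z‖ =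
      ((4 * π * s) ^ (-((n : ℝ) / 2)) * (4 * π * t) ^ (-((n : ℝ) / 2)) *
        Real.exp (-(‖x - z‖ ^ 2 / (4 * (s + t))))) * Real.exp (-b * ‖y‖ ^ 2) := by
    intro y
    have e1 : x - (y + m) = (s / (s + t)) • (x - z) - y := by
      have : x = (s / (s + t)) • x + (t / (s + t)) • x := by
        rw [← add_smul, ← add_div, div_self hst.ne', one_smul]
      rw [hm, smul_sub]
      nth_rw 1 [this]
      abel
    have e2 : (y + m) - z = (t / (s + t)) • (x - z) + y := by
      have : z = (s / (s + t)) • z + (t / (s + t)) • z := by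
        rw [← add_smul, ← add_div, div_self hst.ne', one_smul]
      rw [hm, smul_sub]
      nth_rw 2 [this]
      abel
    have : -(‖x - (y + m)‖ ^ 2 / (4 * s)) + -(‖(y + m) - z‖ ^ 2 / (4 * t)) =
        -(‖x - z‖ ^ 2 / (4 * (s + t))) + -b * ‖y‖ ^ 2 := by
      rw [e1, e2, norm_sub_sq_real, norm_add_sq_real, real_inner_smul_left, real_inner_smul_left,
        norm_smul, norm_smul, hb, Real.norm_of_nonneg (by positivity),
        Real.norm_of_nonneg (by positivity)]
      field_simp
      ring
    unfold rzh
    rw [mul_mul_mul_comm, ← Real.exp_add, this, Real.exp_add]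
    ring
  have hint := GaussianFourier.integral_rexp_neg_mul_sq_norm (V := Rn n) hbp
  have hI : Integrable (fun v : Rn n => Real.exp (-b * ‖v‖ ^ 2)) := by
    by_contra hc
    rw [integral_undef hc] at hint
    have : 0 < (π / b) ^ ((Module.finrank ℝ (Rn n) : ℝ) / 2) := by positivity
    linarith
  rw [← lintegral_add_right_eq_self _ m]
  simp_rw [← ENNReal.ofReal_mul (rzh_pos n hs _).le, key]
  rw [← ofReal_integral_eq_lintegral_ofReal (hI.const_mul _)
    (Eventually.of_forall fun y => by positivity), integral_const_mul, hint]
  congr 1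
  unfold rzh
  rw [finrank_euclideanSpace_fin, mul_right_comm, Real.rpow_neg (by positivity),
    Real.rpow_neg (by positivity), Real.rpow_neg (by positivity), ← Real.inv_rpow (by positivity),
    ← Real.inv_rpow (by positivity), ← Real.inv_rpow (by positivity),
    ← Real.mul_rpow (by positivity) (by positivity),
    ← Real.mul_rpow (by positivity) (by positivity)]
  congr 2
  rw [hb]
  field_simp
  try ring

lemma rzk_eq {n : ℕ} {β : ℝ} (h : β ∈ Set.Ioo 0 (n : ℝ)) {x : Rn n} (hx : x ≠ 0) :
    ENNReal.ofReal (rzk n β x) = ∫⁻ t, rzW (β / 2) t * ENNReal.ofReal (rzh n t ‖x‖) := by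
  have hr : 0 < ‖x‖ := norm_pos_iff.2 hx
  set r := ‖x‖ with hrd
  set a : ℝ := ((n : ℝ) - β) / 2 with had
  have ha : 0 < a := by linarith [h.2]
  have hG := Real.Gamma_pos_of_pos ha
  have hG' : 0 < Real.Gamma (β / 2) := Real.Gamma_pos_of_pos (by linarith [h.1])
  have h1 : ∫⁻ t, rzW (β / 2) t * ENNReal.ofReal (rzh n t r) =
      ∫⁻ t in Set.Ioi 0, rzW (β / 2) t * ENNReal.ofReal (rzh n t r) := by
    rw [← lintegral_indicator measurableSet_Ioi]
    congr 1
    ext t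
    by_cases ht : 0 < t
    · simp [ht]
    · simp [ht, rzW]
  have himg : (fun t : ℝ => t⁻¹) '' Set.Ioi 0 = Set.Ioi 0 := by
    ext t
    constructor
    · rintro ⟨s, hs, rfl⟩
      exact inv_pos.2 (Set.mem_Ioi.1 hs)
    · intro ht
      exact ⟨t⁻¹, Set.mem_Ioi.2 (inv_pos.2 (Set.mem_Ioi.1 ht)), inv_inv t⟩
  have h2 := lintegral_image_eq_lintegral_abs_deriv_mul (s := Set.Ioi (0 : ℝ))
    (f := fun t : ℝ => t⁻¹) (f' := fun t => -(t ^ 2)⁻¹) measurableSet_Ioi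
    (fun t ht => (hasDerivAt_inv (ne_of_gt ht)).hasDerivWithinAt)
    (inv_injective.injOn) (fun t => rzW (β / 2) t * ENNReal.ofReal (rzh n t r))
  rw [himg] at h2
  have h3 : ∫⁻ t, ProbabilityTheory.gammaPDF a (r ^ 2 / 4) t =
      ∫⁻ t in Set.Ioi 0, ProbabilityTheory.gammaPDF a (r ^ 2 / 4) t := by
    rw [← lintegral_add_compl _ (measurableSet_Iic (a := (0 : ℝ))), Set.compl_Iic,
      setLIntegral_congr Iio_ae_eq_Iic.symm, ProbabilityTheory.lintegral_gammaPDF_of_nonpos le_rfl,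
      zero_add]
  rw [ProbabilityTheory.lintegral_gammaPDF_eq_one ha (by positivity)] at h3
  rw [h1, h2, ← mul_one (ENNReal.ofReal (rzk n β x)), h3,
    ← lintegral_const_mul' _ _ ENNReal.ofReal_ne_top]
  refine setLIntegral_congr_fun measurableSet_Ioi fun t ht => ?_
  have ht : 0 < t := ht
  have hti : 0 < t⁻¹ := inv_pos.2 ht
  have hg := gammaC_pos h
  rw [ProbabilityTheory.gammaPDF_of_nonneg ht.le, rzW, if_pos hti,
    ← ENNReal.ofReal_mul (rzk_nonneg h x), ← ENNReal.ofReal_mul (by positivity),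
    ← ENNReal.ofReal_mul (by positivity)]
  congr 1
  rw [rzk, gammaC, rzh, ← hrd, ← had, abs_neg, abs_of_pos (by positivity)]
  have e1 : (n : ℝ) - β = 2 * a := by rw [had]; ring
  have e2 : β = n - 2 * a := by linarith
  have p1 : (r ^ 2 / 4) ^ a = r ^ (2 * a) / 2 ^ (2 * a) := by
    rw [Real.div_rpow (by positivity) (by positivity), ← Real.rpow_natCast r 2,
      ← Real.rpow_mul hr.le, show (4 : ℝ) = 2 ^ (2 : ℝ) by norm_num,
      ← Real.rpow_mul (by norm_num)]
    norm_num
  have p2 : (4 * π * t⁻¹) ^ (-((n : ℝ) / 2)) =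
      ((2 : ℝ) ^ (n : ℝ))⁻¹ * (π ^ ((n : ℝ) / 2))⁻¹ * t ^ ((n : ℝ) / 2) := by
    rw [Real.rpow_neg (by positivity), Real.mul_rpow (by positivity) (by positivity),
      Real.mul_rpow (by positivity) (by positivity), Real.inv_rpow ht.le,
      show (4 : ℝ) = 2 ^ (2 : ℝ) by norm_num, ← Real.rpow_mul (by norm_num),
      show (2 : ℝ) * ((n : ℝ) / 2) = n by ring, mul_inv, mul_inv, inv_inv]
  have p3 : t⁻¹ ^ (β / 2 - 1) = t ^ (a - 1) * t ^ 2 / t ^ ((n : ℝ) / 2) := by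
    rw [Real.inv_rpow ht.le, ← Real.rpow_neg ht.le, ← Real.rpow_natCast t 2, ← Real.rpow_add ht,
      ← Real.rpow_sub ht]
    congr 1
    rw [had]; push_cast; ring
  have p4 : (2 : ℝ) ^ β = 2 ^ (n : ℝ) / 2 ^ (2 * a) := by
    rw [← Real.rpow_sub (by norm_num)]
    congr 1
  have p5 : -(r ^ 2 / (4 * t⁻¹)) = -(r ^ 2 / 4 * t) := by
    field_simp
  rw [p1, p2, p3, p4, p5, e1]
  have q1 : 0 < r ^ (2 * a) := by positivity
  have q2 : 0 < (2 : ℝ) ^ (2 * a) := by positivity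
  have q3 : 0 < (2 : ℝ) ^ (n : ℝ) := by positivity
  have q4 : 0 < t ^ ((n : ℝ) / 2) := by positivity
  have q5 : 0 < π ^ ((n : ℝ) / 2) := by positivity
  field_simp

lemma rzk_conv {n : ℕ} {β₁ β₂ : ℝ} (hβ₁ : β₁ ∈ Set.Ioo 0 (n : ℝ)) (hβ₂ : β₂ ∈ Set.Ioo 0 (n : ℝ))
    (hβ : β₁ + β₂ ∈ Set.Ioo 0 (n : ℝ)) {x z : Rn n} (hxz : x ≠ z) :
    ∫⁻ y, ENNReal.ofReal (rzk n β₁ (x - y)) * ENNReal.ofReal (rzk n β₂ (y - z)) =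
      ENNReal.ofReal (rzk n (β₁ + β₂) (x - z)) := by
  have hn : 0 < n := by
    have := hβ.1.trans hβ.2
    exact_mod_cast this
  have : Nonempty (Fin n) := ⟨⟨0, hn⟩⟩
  have hW1 := measurable_rzW (β₁ / 2)
  have hW2 := measurable_rzW (β₂ / 2)
  have hH := measurable_rzh n
  have hH' : ∀ {X : Type} [MeasurableSpace X] {f g : X → ℝ}, Measurable f → Measurable g →
      Measurable (fun p => ENNReal.ofReal (rzh n (f p) (g p))) := fun hf hg =>
    (hH.comp (hf.prodMk hg)).ennreal_ofReal
  have step1 : ∫⁻ y, ENNReal.ofReal (rzk n β₁ (x - y)) * ENNReal.ofReal (rzk n β₂ (y - z)) =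
      ∫⁻ y, ∫⁻ s, ∫⁻ t, (rzW (β₁ / 2) s * ENNReal.ofReal (rzh n s ‖x - y‖)) *
        (rzW (β₂ / 2) t * ENNReal.ofReal (rzh n t ‖y - z‖)) := by
    apply lintegral_congr_ae
    filter_upwards [Measure.ae_ne volume x, Measure.ae_ne volume z] with y hy1 hy2
    rw [rzk_eq hβ₁ (sub_ne_zero.2 hy1.symm), rzk_eq hβ₂ (sub_ne_zero.2 hy2)]
    have m1 : Measurable fun s => rzW (β₁ / 2) s * ENNReal.ofReal (rzh n s ‖x - y‖) :=
      hW1.mul (hH' measurable_id measurable_const)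
    have m2 : Measurable fun s => rzW (β₂ / 2) s * ENNReal.ofReal (rzh n s ‖y - z‖) :=
      hW2.mul (hH' measurable_id measurable_const)
    rw [← lintegral_mul_const _ m1]
    congr 1
    ext s
    rw [← lintegral_const_mul _ m2]
  rw [step1, lintegral_lintegral_swap]
  swap
  · apply Measurable.aemeasurable
    apply Measurable.lintegral_prod_right'
      (f := fun p : (Rn n × ℝ) × ℝ => (rzW (β₁ / 2) p.1.2 * ENNReal.ofReal (rzh n p.1.2 ‖x - p.1.1‖)) *
        (rzW (β₂ / 2) p.2 * ENNReal.ofReal (rzh n p.2 ‖p.1.1 - z‖)))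
    exact ((hW1.comp (by fun_prop)).mul (hH' (by fun_prop) (by fun_prop))).mul
      ((hW2.comp (by fun_prop)).mul (hH' (by fun_prop) (by fun_prop)))
  have step2 : ∀ s, ∫⁻ y, ∫⁻ t, (rzW (β₁ / 2) s * ENNReal.ofReal (rzh n s ‖x - y‖)) *
        (rzW (β₂ / 2) t * ENNReal.ofReal (rzh n t ‖y - z‖)) =
      ∫⁻ u, rzW (β₁ / 2) s * rzW (β₂ / 2) (u - s) * ENNReal.ofReal (rzh n u ‖x - z‖) := by
    intro s
    rw [lintegral_lintegral_swap]
    swap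
    · exact (((measurable_const).mul (hH' (by fun_prop) (by fun_prop))).mul
        ((hW2.comp (by fun_prop)).mul (hH' (by fun_prop) (by fun_prop)))).aemeasurable
    rw [← lintegral_sub_right_eq_self _ s]
    congr 1
    ext u
    by_cases hs : 0 < s
    · by_cases hu : 0 < u - s
      · have := rzh_conv n hs hu x z
        rw [add_sub_cancel] at this
        rw [← this, ← lintegral_const_mul]
        · congr 1
          ext y
          ring
        · exact (hH' (by fun_prop) (by fun_prop)).mul (hH' (by fun_prop) (by fun_prop))
      · simp [rzW, hu]
    · simp [rzW, hs]
  simp_rw [step2]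
  rw [lintegral_lintegral_swap]
  swap
  · exact (((hW1.comp (by fun_prop)).mul (hW2.comp (by fun_prop))).mul
      (hH' (by fun_prop) (by fun_prop))).aemeasurable
  rw [rzk_eq hβ (sub_ne_zero.2 hxz)]
  congr 1
  ext u
  rw [lintegral_mul_const _ (by fun_prop),
    rzW_conv (by linarith [hβ₁.1]) (by linarith [hβ₂.1])]
  congr 2
  ring

lemma rzk_integrable {n : ℕ} {β : ℝ} (h : β ∈ Set.Ioo 0 (n : ℝ)) {g : Rn n → ℂ}
    (hg : Continuous g) (hgi : Integrable g) {C : ℝ} (hC : ∀ x, ‖g x‖ ≤ C) (x : Rn n) :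
    Integrable (fun z => g z * (rzk n β (x - z) : ℂ)) := by
  have hn : 0 < n := by
    have := h.1.trans h.2
    exact_mod_cast this
  have hγ := gammaC_pos h
  have hk := measurable_rzk n β
  have hloc : IntegrableOn (rzk n β) (Metric.ball 0 1) := by
    apply integrableOn_ball_of_norm_le_rpow (C := 1 / gammaC n β) (α := (n : ℝ) - β)
    · rw [finrank_euclideanSpace_fin]; linarith [h.1]
    · refine Eventually.of_forall fun y => ?_
      rw [Real.norm_of_nonneg (rzk_nonneg h y), rzk, Real.rpow_neg (norm_nonneg _)]
    · exact hk.aestronglyMeasurable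
    · rw [finrank_euclideanSpace_fin]; exact hn
  have hloc' : Integrable ((Metric.ball 0 1).indicator (rzk n β)) :=
    hloc.integrable_indicator measurableSet_ball
  have hI := ((hloc'.comp_sub_left x).const_mul C).add (hgi.norm.mul_const (1 / gammaC n β))
  refine hI.mono' (by
    apply AEStronglyMeasurable.mul hg.aestronglyMeasurable
    apply Measurable.aestronglyMeasurable
    fun_prop) (Eventually.of_forall fun z => ?_)
  have hk0 := rzk_nonneg h (x - z)
  have hC0 : 0 ≤ C := (norm_nonneg _).trans (hC x)
  rw [norm_mul, Complex.norm_real, Real.norm_of_nonneg hk0]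
  simp only [Pi.add_apply]
  by_cases hb : x - z ∈ Metric.ball (0 : Rn n) 1
  · rw [Set.indicator_of_mem hb]
    have := mul_le_mul_of_nonneg_right (hC z) hk0
    have : 0 ≤ ‖g z‖ * (1 / gammaC n β) := by positivity
    linarith
  · rw [Set.indicator_of_notMem hb, mul_zero, zero_add]
    apply mul_le_mul_of_nonneg_left _ (norm_nonneg _)
    rw [rzk]
    apply mul_le_of_le_one_right (by positivity)
    apply inv_le_one_of_one_le₀
    apply Real.one_le_rpow _ (by linarith [h.2])
    simpa using hb

lemma riesz_semigroup {n : ℕ} {β₁ β₂ : ℝ} (hβ₁ : β₁ ∈ Set.Ioo 0 (n : ℝ))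
    (hβ₂ : β₂ ∈ Set.Ioo 0 (n : ℝ))
    (hβ : β₁ + β₂ ∈ Set.Ioo 0 (n : ℝ)) {g : Rn n → ℂ}
    (hg : Continuous g) (hgi : Integrable g) {C : ℝ} (hC : ∀ x, ‖g x‖ ≤ C) (x : Rn n) :
    ∫ y, (∫ z, g z * (rzk n β₂ (y - z) : ℂ)) * (rzk n β₁ (x - y) : ℂ) =
      ∫ z, g z * (rzk n (β₁ + β₂) (x - z) : ℂ) := by
  have hn : 0 < n := by
    have := hβ.1.trans hβ.2
    exact_mod_cast this
  have : Nonempty (Fin n) := ⟨⟨0, hn⟩⟩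
  have hk1 := measurable_rzk n β₁
  have hk2 := measurable_rzk n β₂
  have hgm := hg.measurable
  simp_rw [← integral_mul_const]
  have hm : Measurable (Function.uncurry fun y z : Rn n =>
      g z * (rzk n β₂ (y - z) : ℂ) * (rzk n β₁ (x - y) : ℂ)) := by
    unfold Function.uncurry
    fun_prop
  have hen : ∀ y z, ‖g z * (rzk n β₂ (y - z) : ℂ) * (rzk n β₁ (x - y) : ℂ)‖ₑ =
      ‖g z‖ₑ * (ENNReal.ofReal (rzk n β₁ (x - y)) * ENNReal.ofReal (rzk n β₂ (y - z))) := by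
    intro y z
    rw [enorm_mul, enorm_mul, ← ofReal_norm (rzk n β₂ (y - z) : ℂ),
      ← ofReal_norm (rzk n β₁ (x - y) : ℂ), Complex.norm_real, Complex.norm_real,
      Real.norm_of_nonneg (rzk_nonneg hβ₁ _), Real.norm_of_nonneg (rzk_nonneg hβ₂ _)]
    ring
  have hfin : ∫⁻ z, ∫⁻ y, ‖g z * (rzk n β₂ (y - z) : ℂ) * (rzk n β₁ (x - y) : ℂ)‖ₑ < ⊤ := by
    have h0 := (rzk_integrable hβ hg hgi hC x).hasFiniteIntegral
    rw [HasFiniteIntegral] at h0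
    refine lt_of_le_of_lt (le_of_eq ?_) h0
    apply lintegral_congr_ae
    filter_upwards [Measure.ae_ne volume x] with z hz
    simp_rw [hen]
    rw [lintegral_const_mul _ (by fun_prop), rzk_conv hβ₁ hβ₂ hβ hz.symm, enorm_mul,
      ← ofReal_norm (rzk n (β₁ + β₂) (x - z) : ℂ), Complex.norm_real,
      Real.norm_of_nonneg (rzk_nonneg hβ _)]
  have hint : Integrable (Function.uncurry fun y z : Rn n =>
      g z * (rzk n β₂ (y - z) : ℂ) * (rzk n β₁ (x - y) : ℂ)) (volume.prod volume) := by
    refine ⟨hm.aestronglyMeasurable, ?_⟩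
    rw [HasFiniteIntegral, lintegral_prod _ hm.enorm.aemeasurable, lintegral_lintegral_swap]
    · exact hfin
    · exact hm.enorm.aemeasurable
  rw [integral_integral_swap hint]
  apply integral_congr_ae
  filter_upwards [Measure.ae_ne volume x] with z hz
  simp_rw [mul_assoc]
  rw [integral_const_mul]
  congr 1
  simp_rw [← Complex.ofReal_mul]
  rw [integral_complex_ofReal]
  congr 1
  rw [integral_eq_lintegral_of_nonneg_ae
    (Eventually.of_forall fun y => mul_nonneg (rzk_nonneg hβ₂ _) (rzk_nonneg hβ₁ _))
    (by apply Measurable.aestronglyMeasurable; fun_prop)]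
  simp_rw [ENNReal.ofReal_mul (rzk_nonneg hβ₂ _)]
  rw [← ENNReal.toReal_ofReal (rzk_nonneg hβ (x - z)), ← rzk_conv hβ₁ hβ₂ hβ hz.symm]
  congr 2
  ext y
  ring

lemma chirp_mul_neg {n : ℕ} (α x : Rn n) : chirp (-α) x * chirp α x = 1 := by
  unfold chirp
  rw [← Complex.exp_add, ← mul_add, ← Complex.ofReal_add, ← Finset.sum_add_distrib]
  have : ∀ k, Real.cot ((-α) k) / 2 * x k ^ 2 + Real.cot (α k) / 2 * x k ^ 2 = 0 := by
    intro k
    simp [Real.cot_eq_cos_div_sin, div_neg]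
    ring
  rw [Finset.sum_congr rfl fun k _ => this k]
  simp

lemma norm_chirp {n : ℕ} (α x : Rn n) : ‖chirp α x‖ = 1 := by
  unfold chirp
  rw [mul_assoc, mul_comm Complex.I, ← mul_assoc, ← Complex.ofReal_ofNat, ← Complex.ofReal_mul,
    ← Complex.ofReal_mul, Complex.norm_exp_ofReal_mul_I]

lemma continuous_chirp {n : ℕ} (α : Rn n) : Continuous (chirp α) := by
  unfold chirp
  fun_prop

lemma rieszPotChirp_eq {n : ℕ} (α : Rn n) (β : ℝ) (f : Rn n → ℂ) (x : Rn n) :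
    rieszPotChirp α β f x = chirp (-α) x * ∫ y, (f y * chirp α y) * (rzk n β (x - y) : ℂ) := by
  unfold rieszPotChirp rzk
  rw [mul_comm (((1 / gammaC n β : ℝ) : ℂ)), mul_assoc, ← integral_const_mul]
  congr 2
  ext y
  push_cast
  ring

/-- semigroup property of fractional Riesz potentials. -/
theorem rieszPotChirp_semigroup {n : ℕ} (α : Rn n) (hα : notPiZ α)
    (β₁ β₂ : ℝ) (hβ₁ : β₁ ∈ Set.Ioo 0 (n : ℝ)) (hβ₂ : β₂ ∈ Set.Ioo 0 (n : ℝ))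
    (hβ : β₁ + β₂ ∈ Set.Ioo 0 (n : ℝ)) (f : 𝓢(Rn n, ℂ)) (φ : 𝓢(Rn n, ℂ)) :
    ∫ x, rieszPotChirp α β₁ (rieszPotChirp α β₂ (⇑f)) x * φ x
      = ∫ x, rieszPotChirp α (β₁ + β₂) (⇑f) x * φ x := by
  congr 1
  ext x
  congr 1
  have hb : ∃ C, ∀ y, ‖f y‖ ≤ C := ⟨_, fun y => f.toBoundedContinuousFunction.norm_coe_le_norm y⟩
  obtain ⟨C, hC⟩ := hb
  have hgc : Continuous fun y => f y * chirp α y := f.continuous.mul (continuous_chirp α)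
  have hn : ∀ y, ‖f y * chirp α y‖ = ‖f y‖ := fun y => by rw [norm_mul, norm_chirp, mul_one]
  have hgi : Integrable fun y => f y * chirp α y :=
    (f.integrable (μ := volume)).mono hgc.aestronglyMeasurable
      (Eventually.of_forall fun y => (hn y).le)
  rw [rieszPotChirp_eq, rieszPotChirp_eq,
    ← riesz_semigroup hβ₁ hβ₂ hβ hgc hgi (fun y => (hn y).trans_le (hC y)) x]
  congr 2
  ext y
  rw [rieszPotChirp_eq]
  linear_combination (rzk n β₁ (x - y) : ℂ) * (∫ z, (f z * chirp α z) * (rzk n β₂ (y - z) : ℂ)) *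
    chirp_mul_neg α y
end
end

section
/- (FRFT inversion) For α ∈ ℝⁿ with no coordinate in πℤ and any Schwartz function f, F_{-α}(F_α(f)) = f; equivalently f(x) = ∫_{ℝⁿ} F_α(f)(u) K_{-α}(u,x) du for all x ∈ ℝⁿ. -/
open MeasureTheory Real SchwartzMap Filter
open scoped FourierTransform

noncomputable section

lemma aux_exp_growth : Function.HasTemperateGrowth
    (fun t : ℝ => Complex.exp (2 * (π : ℂ) * Complex.I * (t : ℂ))) := by
  set c : ℂ := 2 * (π : ℂ) * Complex.I with hc
  have hd : ∀ n : ℕ, iteratedDeriv n (fun t : ℝ => Complex.exp (c * (t : ℂ))) =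
      fun t : ℝ => c ^ n * Complex.exp (c * (t : ℂ)) := by
    intro n
    induction n with
    | zero => simp
    | succ n ih =>
      rw [iteratedDeriv_succ, ih]
      ext t
      have h1 : HasDerivAt (fun t : ℝ => c * (t : ℂ)) (c * 1) t :=
        (Complex.ofRealCLM.hasDerivAt (x := t)).const_mul c
      rw [(h1.cexp.const_mul (c ^ n)).deriv]
      ring
  refine ⟨?_, fun n => ⟨0, ‖c ^ n‖, fun t => ?_⟩⟩
  · have : ContDiff ℝ ⊤ (fun t : ℝ => c * (t : ℂ)) :=
      contDiff_const.mul Complex.ofRealCLM.contDiff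
    exact (this.cexp).of_le le_top
  · rw [norm_iteratedFDeriv_eq_norm_iteratedDeriv, hd]
    have : ‖Complex.exp (c * (t : ℂ))‖ = 1 := by
      have := Complex.norm_exp_ofReal_mul_I (2 * π * t)
      rw [← this, hc]; congr 2; push_cast; ring
    simp only [norm_mul, this]; simp

lemma aux_chirp_growth {n : ℕ} (α : Rn n) : Function.HasTemperateGrowth (chirp α) := by
  refine aux_exp_growth.comp
    (f := fun x : Rn n => ∑ k, Real.cot (α k) / 2 * (x k) ^ 2) ?_
  apply Function.HasTemperateGrowth.sum
  intro k _
  have : Function.HasTemperateGrowth (fun x : Rn n => x k) :=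
    (EuclideanSpace.proj k : Rn n →L[ℝ] ℝ).hasTemperateGrowth
  fun_prop

lemma aux_sin_ne {n : ℕ} {α : Rn n} (hα : notPiZ α) (k : Fin n) : Real.sin (α k) ≠ 0 := by
  intro h
  obtain ⟨m, hm⟩ := Real.sin_eq_zero_iff.1 h
  exact hα k m hm.symm

lemma aux_const (a : ℝ) (h : Real.sin a ≠ 0) :
    (1 - Complex.I * (Real.cot (-a) : ℂ)) ^ ((1 : ℂ) / 2) *
    (1 - Complex.I * (Real.cot a : ℂ)) ^ ((1 : ℂ) / 2) = ((|(Real.sin a)⁻¹| : ℝ) : ℂ) := by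
  have hcot : Real.cot (-a) = - Real.cot a := by
    simp [Real.cot_eq_cos_div_sin, div_neg]
  set z : ℂ := 1 - Complex.I * (Real.cot a : ℂ) with hz
  have hre : z.re = 1 := by simp [hz, -Complex.ofReal_cot]
  have him : z.im = - Real.cot a := by simp [hz, -Complex.ofReal_cot]
  have h1 : 1 - Complex.I * (Real.cot (-a) : ℂ) = (starRingEnd ℂ) z := by
    apply Complex.ext <;> simp [hz, hcot, -Complex.ofReal_cot]
  have harg : z.arg ≠ π := by
    intro h; rw [Complex.arg_eq_pi_iff] at h; linarith [h.1]
  have hz0 : z ≠ 0 := by intro h; rw [h] at hre; simp at hre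
  rw [h1, Complex.conj_cpow _ _ harg]
  have h2 : (starRingEnd ℂ) ((1 : ℂ) / 2) = (1 : ℂ) / 2 := by
    rw [map_div₀, map_one, Complex.conj_ofNat]
  rw [h2, mul_comm, Complex.mul_conj, Complex.normSq_eq_norm_sq]
  congr 1
  have h3 : ‖z ^ ((1 : ℂ) / 2)‖ = ‖z‖ ^ ((1 : ℝ) / 2) := by
    have := Complex.norm_cpow_real z (1 / 2)
    rw [← this]; simp
  rw [h3, ← Real.sqrt_eq_rpow, Real.sq_sqrt (norm_nonneg _)]
  rw [← Real.sqrt_sq (norm_nonneg z), ← Complex.normSq_eq_norm_sq, ← Real.sqrt_sq_eq_abs]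
  congr 1
  rw [Complex.normSq_apply, hre, him, Real.cot_eq_cos_div_sin]
  field_simp
  have := Real.sin_sq_add_cos_sq a
  linarith

lemma aux_kernel {n : ℕ} (α x u : Rn n) :
    frftKernel α x u = cConst α * chirp α x * chirp α u *
      Complex.exp (((-2 * π * inner ℝ x (tilde α u) : ℝ) : ℂ) * Complex.I) := by
  unfold frftKernel cConst chirp
  rw [Finset.prod_mul_distrib, ← Complex.exp_sum, mul_assoc (∏ k, _), mul_assoc (∏ k, _),
    ← Complex.exp_add, ← Complex.exp_add]
  congr 2
  have hi : inner ℝ x (tilde α u) = ∑ k, x k * u k / Real.sin (α k) := by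
    rw [PiLp.inner_apply]
    apply Finset.sum_congr rfl
    intro k _
    simp [tilde]; ring
  have : ∑ k, (Real.cot (α k) / 2 * ((x k) ^ 2 + (u k) ^ 2) - x k * u k / Real.sin (α k)) =
    (∑ k, Real.cot (α k) / 2 * (x k) ^ 2) + (∑ k, Real.cot (α k) / 2 * (u k) ^ 2)
      - inner ℝ x (tilde α u) := by
    rw [hi, ← Finset.sum_add_distrib, ← Finset.sum_sub_distrib]
    exact Finset.sum_congr rfl fun k _ => by ring
  rw [← Finset.mul_sum, ← Complex.ofReal_sum, this]
  push_cast
  ring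

lemma aux_cov {n : ℕ} (α : Rn n) (h : ∀ k, Real.sin (α k) ≠ 0) (G : Rn n → ℂ) :
    ((∏ k, |(Real.sin (α k))⁻¹| : ℝ) : ℂ) * ∫ u, G (tilde α u) = ∫ u, G u := by
  set D : Fin n → ℝ := fun k => (Real.sin (α k))⁻¹ with hD
  have hdet : Matrix.det (Matrix.diagonal D) ≠ 0 := by
    rw [Matrix.det_diagonal]
    exact Finset.prod_ne_zero_iff.2 fun k _ => inv_ne_zero (h k)
  have key := Real.smul_map_diagonal_volume_pi hdet
  have e1 : ∀ H : Rn n → ℂ, ∫ u, H u = ∫ v : Fin n → ℝ, H (WithLp.toLp 2 v) := fun H =>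
    ((PiLp.volume_preserving_toLp (Fin n)).integral_comp
      (MeasurableEquiv.toLp 2 (Fin n → ℝ)).measurableEmbedding H).symm
  rw [e1, e1]
  conv_rhs => rw [← key]
  have hemb : MeasurableEmbedding (Matrix.toLin' (Matrix.diagonal D)) := by
    let E := (LinearEquiv.ofIsUnitDet (f := Matrix.toLin' (Matrix.diagonal D))
      (v := Pi.basisFun ℝ (Fin n)) (v' := Pi.basisFun ℝ (Fin n)) (by
        rw [LinearMap.toMatrix_eq_toMatrix', LinearMap.toMatrix'_toLin']
        exact isUnit_iff_ne_zero.2 hdet)).toContinuousLinearEquiv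
    exact E.toHomeomorph.measurableEmbedding
  rw [integral_smul_measure, hemb.integral_map, ENNReal.toReal_ofReal (abs_nonneg _),
    Matrix.det_diagonal, Finset.abs_prod, Complex.real_smul]
  congr 2
  ext v
  congr 1
  ext k
  simp [tilde, Matrix.mulVec_diagonal, hD, div_eq_inv_mul]

/-- FRFT inversion theorem. -/
theorem frft_inversion {n : ℕ} (α : Rn n) (hα : notPiZ α) (f : 𝓢(Rn n, ℂ)) (x : Rn n) :
    frft (-α) (frft α (⇑f)) x = f x := by
  have hs := aux_sin_ne hα
  let h : 𝓢(Rn n, ℂ) := SchwartzMap.smulLeftCLM ℂ (chirp α) f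
  have hh : ∀ y, h y = chirp α y * f y := fun y => by
    simp [h, SchwartzMap.smulLeftCLM_apply_apply (aux_chirp_growth α)]
  have hchirp : ∀ y, chirp (-α) y * chirp α y = 1 := fun y => by
    unfold chirp
    rw [← Complex.exp_add, ← mul_add, ← Complex.ofReal_add, ← Finset.sum_add_distrib]
    simp [Real.cot_eq_cos_div_sin, div_neg, neg_div]
  have htilde : ∀ u, inner ℝ u (tilde (-α) x) = - inner ℝ (tilde α u) x := fun u => by
    rw [PiLp.inner_apply, PiLp.inner_apply, ← Finset.sum_neg_distrib]
    apply Finset.sum_congr rfl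
    intro k _
    simp [tilde, div_neg]; ring
  have h1 : ∀ u, frft α f u = cConst α * chirp α u * 𝓕 (h : Rn n → ℂ) (tilde α u) := fun u => by
    rw [Real.fourier_eq', frft, ← integral_const_mul]
    congr 1; ext y
    rw [aux_kernel, hh, smul_eq_mul]; ring
  have hc : cConst (-α) * cConst α = ((∏ k, |(Real.sin (α k))⁻¹| : ℝ) : ℂ) := by
    unfold cConst
    rw [← Finset.prod_mul_distrib, Complex.ofReal_prod]
    exact Finset.prod_congr rfl fun k _ => by
      simpa using aux_const (α k) (hs k)
  have hinv : 𝓕⁻ (𝓕 (h : Rn n → ℂ)) x = h x := by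
    have hF : Integrable (𝓕 (h : Rn n → ℂ)) := by
      rw [← SchwartzMap.fourier_coe]; exact (𝓕 h).integrable
    rw [h.continuous.fourierInv_fourier_eq h.integrable hF]
  have h2 : frft (-α) (frft α f) x = chirp (-α) x * (cConst (-α) * cConst α *
      ∫ u, (fun v => Complex.exp (((2 * π * inner ℝ v x : ℝ) : ℂ) * Complex.I) *
        𝓕 (h : Rn n → ℂ) v) (tilde α u)) := by
    rw [frft, ← integral_const_mul, ← integral_const_mul]
    congr 1; ext u
    rw [aux_kernel, h1, htilde]
    have e : (-2 * π * -inner ℝ (tilde α u) x : ℝ) = 2 * π * inner ℝ (tilde α u) x := by ring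
    rw [e]
    linear_combination (cConst α * 𝓕 (h : Rn n → ℂ) (tilde α u) * cConst (-α) * chirp (-α) x *
      Complex.exp (((2 * π * inner ℝ (tilde α u) x : ℝ) : ℂ) * Complex.I)) * hchirp u
  rw [h2, hc, aux_cov α hs (fun v => Complex.exp (((2 * π * inner ℝ v x : ℝ) : ℂ) * Complex.I) *
        𝓕 (h : Rn n → ℂ) v)]
  rw [Real.fourierInv_eq'] at hinv
  simp only [smul_eq_mul] at hinv
  rw [hinv, hh, ← mul_assoc, hchirp, one_mul]
end
end
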